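/- Let (G,c,o) be a recurrent rooted network, and for each integer n ≥ 1 let ψ_{r_n} be a potential and r_n an integer chosen so that min_{v∈∂B(o,r_n)} ψ_{r_n}(v) ≥ n·2^n. Then h := Σ_{n≥1} 2^{-n} ψ_{r_n} is a potential, and for each n the set {v ∈ V : h(v) < n} is contained in B(o,r_n) and hence finite; in particular h tends to infinity. -/

import Mathlib

open scoped ENNReal
open Filter Topology Classical
noncomputable section

/-- A rooted network: a connected, locally finite simple graph with positive
symmetric edge conductances (extended by `0` to non-edges) and a root `o`. -/
structure RootedNetwork (V : Type*) where
  G : SimpleGraph V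
  locallyFinite : ∀ x : V, (G.neighborSet x).Finite
  connected : G.Connected
  c : V → V → ℝ
  c_symm : ∀ x y, c x y = c y x
  c_pos : ∀ x y, G.Adj x y → 0 < c x y
  c_eq_zero : ∀ x y, ¬ G.Adj x y → c x y = 0
  o : V

namespace RootedNetwork

variable {V : Type*}

/-- The vertex weight `c_x = Σ_{z ∼ x} c_{xz}`. -/
noncomputable def cv (N : RootedNetwork V) (x : V) : ℝ := ∑' y, N.c x y

/-- The transition probability `p(x,y) = c_{xy} / c_x` of the network random walk. -/
noncomputable def p (N : RootedNetwork V) (x y : V) : ℝ≥0∞ :=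
  ENNReal.ofReal (N.c x y / N.cv x)

/-- The probability that the network random walk started at `x` begins with the
given finite sequence of steps. -/
noncomputable def pathProb (N : RootedNetwork V) : V → List V → ℝ≥0∞
  | _, [] => 1
  | x, y :: l => N.p x y * pathProb N y l

/-- The probability, starting from `x`, that the walk ever visits `b`
(`P_x(τ_b < ∞)`), computed by decomposing over the finite path up to the first
visit of `b`. -/
noncomputable def hitProb (N : RootedNetwork V) (x b : V) : ℝ≥0∞ :=
  if x = b then 1
  else ∑' l : {l : List V // l.getLast? = some b ∧ b ∉ l.dropLast}, N.pathProb x l.1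

/-- A rooted network is recurrent if the walk started from any vertex almost
surely visits the root `o`. -/
def Recurrent (N : RootedNetwork V) : Prop := ∀ x : V, N.hitProb x N.o = 1

/-- The Green kernel `G_o(x,y) = Σ_{n ≥ 0} P_x(X_n = y, τ_o > n)` of the walk
killed at the root, computed as a sum over finite paths from `x` to `y`
avoiding `o` (the `n = 0` term is the first summand). -/
noncomputable def GreenKer (N : RootedNetwork V) (x y : V) : ℝ≥0∞ :=
  (if x = y ∧ x ≠ N.o then 1 else 0) +
    ∑' l : {l : List V // l.getLast? = some y ∧ N.o ∉ x :: l}, N.pathProb x l.1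

/-- The Green density `g_o(x,y) = G_o(x,y) / c_y`. -/
noncomputable def greenDensity (N : RootedNetwork V) (x y : V) : ℝ≥0∞ :=
  N.GreenKer x y / ENNReal.ofReal (N.cv y)

/-- The network Laplacian `Δ f (v) = Σ_{x ∼ v} c_{vx} (f(x) - f(v))`. -/
noncomputable def lap (N : RootedNetwork V) (f : V → ℝ) (v : V) : ℝ :=
  ∑' x, N.c v x * (f x - f v)

/-- A potential: a nonnegative function vanishing at `o`, with Laplacian `1`
at `o`, harmonic everywhere else. -/
def IsPotential (N : RootedNetwork V) (h : V → ℝ) : Prop :=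
  (∀ v, 0 ≤ h v) ∧ h N.o = 0 ∧ N.lap h N.o = 1 ∧ ∀ v, v ≠ N.o → N.lap h v = 0

end RootedNetwork

namespace RootedNetwork

variable {V : Type*}

def nb (N : RootedNetwork V) (x : V) : Finset V := (N.locallyFinite x).toFinset

lemma mem_nb (N : RootedNetwork V) (x y : V) : y ∈ N.nb x ↔ N.G.Adj x y := by
  simp [nb]

lemma c_off (N : RootedNetwork V) (x y : V) (h : y ∉ N.nb x) : N.c x y = 0 :=
  N.c_eq_zero x y (by rwa [mem_nb] at h)

lemma c_nonneg (N : RootedNetwork V) (x y : V) : 0 ≤ N.c x y := by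
  by_cases h : N.G.Adj x y
  · exact (N.c_pos x y h).le
  · exact (N.c_eq_zero x y h).ge

lemma cv_eq (N : RootedNetwork V) (x : V) : N.cv x = ∑ y ∈ N.nb x, N.c x y :=
  tsum_eq_sum (fun y hy => N.c_off x y hy)

lemma cv_nonneg (N : RootedNetwork V) (x : V) : 0 ≤ N.cv x := by
  rw [cv_eq]; exact Finset.sum_nonneg (fun y _ => N.c_nonneg x y)

lemma lap_eq (N : RootedNetwork V) (f : V → ℝ) (x : V) :
    N.lap f x = ∑ y ∈ N.nb x, N.c x y * (f y - f x) :=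
  tsum_eq_sum (fun y hy => by rw [N.c_off x y hy, zero_mul])

lemma lap_eq' (N : RootedNetwork V) (f : V → ℝ) (x : V) :
    N.lap f x = (∑ y ∈ N.nb x, N.c x y * f y) - N.cv x * f x := by
  rw [lap_eq, cv_eq, Finset.sum_mul, ← Finset.sum_sub_distrib]
  exact Finset.sum_congr rfl (fun y _ => by ring)

lemma harnack (N : RootedNetwork V) (v : V) :
    ∃ K : ℝ, ∀ h : V → ℝ, N.IsPotential h → h v ≤ K := by
  have hc := N.connected.preconnected N.o v
  rw [SimpleGraph.reachable_iff_reflTransGen] at hc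
  induction hc with
  | refl => exact ⟨0, fun h hh => hh.2.1.le⟩
  | @tail b d _ hbd ih =>
    obtain ⟨K, hK⟩ := ih
    refine ⟨(1 + N.cv b * K) / N.c b d, fun h hh => ?_⟩
    have hl : N.lap h b ≤ 1 := by
      by_cases hb : b = N.o
      · rw [hb]; exact hh.2.2.1.le
      · rw [hh.2.2.2 b hb]; exact zero_le_one
    rw [lap_eq'] at hl
    have h1 : N.c b d * h d ≤ ∑ y ∈ N.nb b, N.c b y * h y :=
      Finset.single_le_sum (f := fun y => N.c b y * h y)
        (fun y _ => mul_nonneg (N.c_nonneg b y) (hh.1 y)) ((N.mem_nb b d).2 hbd)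
    have h2 := mul_le_mul_of_nonneg_left (hK h hh) (N.cv_nonneg b)
    rw [le_div_iff₀ (N.c_pos b d hbd)]
    linarith

lemma ball_finite (N : RootedNetwork V) (R : ℕ) : {w : V | N.G.dist N.o w < R}.Finite := by
  induction R with
  | zero => simp
  | succ k ih =>
    refine ((Set.finite_singleton N.o).union
      (ih.biUnion (fun x _ => N.locallyFinite x))).subset ?_
    intro w hw
    simp only [Set.mem_ofPred_eq] at hw
    by_cases hwo : w = N.o
    · left; exact hwo
    · right
      obtain ⟨q, hq⟩ := (N.connected w N.o).exists_walk_length_eq_dist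
      cases q with
      | nil => exact absurd rfl hwo
      | @cons _ x _ hadj q' =>
        simp only [Set.mem_iUnion]
        refine ⟨x, ?_, hadj.symm⟩
        have := SimpleGraph.dist_le q'.reverse
        simp only [SimpleGraph.Walk.length_cons, SimpleGraph.Walk.length_reverse] at *
        rw [SimpleGraph.dist_comm] at hq
        simp only [Set.mem_ofPred_eq]
        omega

def FF (N : RootedNetwork V) (b : V) (k : ℕ) (x : V) : ℝ≥0∞ :=
  ∑' l : List V, if (l.getLast? = some b ∧ b ∉ l.dropLast) ∧ l.length ≤ k
    then N.pathProb x l else 0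

lemma tsum_list (f : List V → ℝ≥0∞) :
    ∑' l, f l = f [] + ∑' y, ∑' l, f (y :: l) := by
  let e : Unit ⊕ (V × List V) ≃ List V :=
    { toFun := fun o => match o with | .inl _ => [] | .inr q => q.1 :: q.2
      invFun := fun l => match l with | [] => .inl () | y :: l => .inr (y, l)
      left_inv := by rintro (_ | ⟨y, l⟩) <;> rfl
      right_inv := by rintro (_ | ⟨y, l⟩) <;> rfl }
  rw [← e.tsum_eq f, Summable.tsum_sum ENNReal.summable ENNReal.summable]
  congr 1
  · exact tsum_fintype _ |>.trans (by simp [e])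
  · exact ENNReal.tsum_prod'

lemma FF_le (N : RootedNetwork V) (b : V) (u : V → ℝ≥0∞) (hb : 1 ≤ u b)
    (hu : ∀ x, ∑' y, N.p x y * u y ≤ u x) (k : ℕ) : ∀ x, N.FF b k x ≤ u x := by
  induction k with
  | zero =>
    intro x
    have : N.FF b 0 x = 0 := by
      unfold FF
      rw [ENNReal.tsum_eq_zero]
      intro l
      rw [if_neg]
      rintro ⟨⟨h1, -⟩, h2⟩
      have : l = [] := List.length_eq_zero_iff.1 (by omega)
      subst this
      simp at h1
    rw [this]; exact zero_le
  | succ k ih =>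
    intro x
    refine le_trans ?_ (hu x)
    unfold FF
    rw [tsum_list, if_neg (by simp), zero_add]
    refine ENNReal.tsum_le_tsum (fun y => ?_)
    by_cases hy : y = b
    · subst hy
      rw [tsum_eq_single []]
      · split_ifs
        · simp only [pathProb]
          exact mul_le_mul_right hb _
        · exact zero_le
      · intro l hl
        rw [if_neg]
        rintro ⟨⟨-, h⟩, -⟩
        apply h
        cases l with
        | nil => exact absurd rfl hl
        | cons z l => simp
    · refine le_trans ?_ (mul_le_mul_right (ih y) _)
      unfold FF
      rw [← ENNReal.tsum_mul_left]
      refine ENNReal.tsum_le_tsum (fun l => ?_)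
      split_ifs with h1 h2
      · exact le_rfl
      · exfalso
        apply h2
        obtain ⟨⟨h3, h4⟩, h5⟩ := h1
        cases l with
        | nil => simp at h3; exact absurd h3 hy
        | cons z l =>
          refine ⟨⟨?_, ?_⟩, ?_⟩
          · simpa using h3
          · intro h; apply h4; simp [h]
          · simpa using h5
      · exact zero_le
      · exact zero_le

lemma hitProb_le (N : RootedNetwork V) (b : V) (u : V → ℝ≥0∞) (hb : 1 ≤ u b)
    (hu : ∀ x, ∑' y, N.p x y * u y ≤ u x) (x : V) : N.hitProb x b ≤ u x := by
  unfold hitProb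
  split_ifs with h
  · rw [h]; exact hb
  · rw [ENNReal.tsum_eq_iSup_sum]
    refine iSup_le (fun s => ?_)
    refine le_trans ?_ (N.FF_le b u hb hu (s.sup (fun l => l.1.length)) x)
    unfold FF
    have := ENNReal.sum_le_tsum (s.map (Function.Embedding.subtype _))
      (f := fun l : List V => if (l.getLast? = some b ∧ b ∉ l.dropLast) ∧
        l.length ≤ s.sup (fun l => l.1.length) then N.pathProb x l else 0)
    refine le_trans ?_ this
    rw [Finset.sum_map]
    refine Finset.sum_le_sum (fun l hl => ?_)
    have h1 : l.1.length ≤ s.sup (fun l => l.1.length) :=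
      Finset.le_sup (f := fun l : {l : List V // l.getLast? = some b ∧ b ∉ l.dropLast} =>
        l.1.length) hl
    exact (if_pos (⟨l.2, h1⟩ : (l.1.getLast? = some b ∧ b ∉ l.1.dropLast) ∧ _)).ge

lemma superharm (N : RootedNetwork V) (u : V → ℝ) (hu0 : ∀ x, 0 ≤ u x) (x : V)
    (hu : ∑ y ∈ N.nb x, N.c x y * u y ≤ N.cv x * u x) :
    ∑' y, N.p x y * ENNReal.ofReal (u y) ≤ ENNReal.ofReal (u x) := by
  rw [tsum_eq_sum (s := N.nb x) (fun y hy => by simp [p, N.c_off x y hy])]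
  have : ∀ y ∈ N.nb x, N.p x y * ENNReal.ofReal (u y)
      = ENNReal.ofReal (N.c x y * u y / N.cv x) := by
    intro y _
    rw [p, ← ENNReal.ofReal_mul (div_nonneg (N.c_nonneg x y) (N.cv_nonneg x))]
    congr 1; ring
  rw [Finset.sum_congr rfl this, ← ENNReal.ofReal_sum_of_nonneg]
  · apply ENNReal.ofReal_le_ofReal
    rw [← Finset.sum_div]
    exact div_le_of_le_mul₀ (N.cv_nonneg x) (hu0 x) (by rwa [mul_comm (u x)])
  · intro y _
    exact div_nonneg (mul_nonneg (N.c_nonneg x y) (hu0 y)) (N.cv_nonneg x)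

lemma outside (N : RootedNetwork V) (hrec : N.Recurrent) (h : V → ℝ) (hh : N.IsPotential h)
    (r : ℕ) (m : ℝ) (hm : 0 < m) (hs : ∀ v, N.G.dist N.o v = r → m ≤ h v)
    (w : V) (hw : r ≤ N.G.dist N.o w) : m ≤ h w := by
  have hr : 0 < r := by
    rcases Nat.eq_zero_or_pos r with h0 | h0
    · have := hs N.o (by simp [h0])
      rw [hh.2.1] at this
      linarith
    · exact h0
  set u : V → ℝ := fun x => if r ≤ N.G.dist N.o x then min 1 (h x / m) else 1 with hu
  have hu1 : ∀ x, u x ≤ 1 := by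
    intro x; simp only [hu]; split_ifs
    · exact min_le_left _ _
    · exact le_rfl
  have hu0 : ∀ x, 0 ≤ u x := by
    intro x; simp only [hu]; split_ifs
    · exact le_min zero_le_one (div_nonneg (hh.1 x) hm.le)
    · exact zero_le_one
  have hsum1 : ∀ x, ∑ y ∈ N.nb x, N.c x y * u y ≤ N.cv x := by
    intro x
    rw [cv_eq]
    refine Finset.sum_le_sum (fun y _ => ?_)
    exact mul_le_of_le_one_right (N.c_nonneg x y) (hu1 y)
  have hsup : ∀ x, ∑ y ∈ N.nb x, N.c x y * u y ≤ N.cv x * u x := by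
    intro x
    by_cases hx : r < N.G.dist N.o x
    · have hux : u x = min 1 (h x / m) := by simp only [hu]; rw [if_pos hx.le]
      rw [hux, mul_min_of_nonneg _ _ (N.cv_nonneg x), mul_one]
      refine le_min (hsum1 x) ?_
      have hxo : x ≠ N.o := by rintro rfl; simp at hx
      have hl := hh.2.2.2 x hxo
      rw [lap_eq'] at hl
      have : N.cv x * (h x / m) = ∑ y ∈ N.nb x, N.c x y * (h y / m) := by
        have e : ∑ y ∈ N.nb x, N.c x y * (h y / m) = (∑ y ∈ N.nb x, N.c x y * h y) / m := by
          rw [Finset.sum_div]; exact Finset.sum_congr rfl (fun y _ => by ring)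
        rw [e, sub_eq_zero.1 hl]; ring
      rw [this]
      refine Finset.sum_le_sum (fun y hy => mul_le_mul_of_nonneg_left ?_ (N.c_nonneg x y))
      have hadj := (N.mem_nb x y).1 hy
      have ht := N.connected.dist_triangle (u := N.o) (v := y) (w := x)
      have h1 : N.G.dist y x = 1 := SimpleGraph.dist_eq_one_iff_adj.2 hadj.symm
      simp only [hu]
      rw [if_pos (by omega)]
      exact min_le_right _ _
    · have hux : u x = 1 := by
        simp only [hu]; split_ifs with h2
        · exact min_eq_left ((one_le_div hm).2 (hs x (by omega)))
        · rfl
      rw [hux, mul_one]; exact hsum1 x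
  have key := N.hitProb_le N.o (fun x => ENNReal.ofReal (u x))
    (by simp only [hu]; rw [if_neg (by simp; omega)]; simp)
    (fun x => N.superharm u hu0 x (hsup x)) w
  rw [hrec w] at key
  have k2 : 1 ≤ u w := ENNReal.one_le_ofReal.1 key
  simp only [hu] at k2
  rw [if_pos hw] at k2
  exact (one_le_div hm).1 (le_trans k2 (min_le_right _ _))

end RootedNetwork

/-- On a recurrent rooted network, if for each `n ≥ 1` the potential `ψ_n` and
radius `r_n` satisfy `min_{v ∈ ∂B(o,r_n)} ψ_n(v) ≥ n·2^n`, then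
`h = Σ_{n ≥ 1} 2^{-n} ψ_n` is a potential, for each `n ≥ 1` the set
`{v : h(v) < n}` is contained in `B(o,r_n)` and hence finite, and in
particular `h` tends to infinity. -/
theorem combined_potential_tendsto_infinity {V : Type*} (N : RootedNetwork V)
    (hrec : N.Recurrent) (r : ℕ → ℕ) (ψ : ℕ → V → ℝ)
    (hpot : ∀ n : ℕ, 1 ≤ n → N.IsPotential (ψ n))
    (hmin : ∀ n : ℕ, 1 ≤ n → ∀ v : V, N.G.dist N.o v = r n →
      (n : ℝ) * 2 ^ n ≤ ψ n v) :
    N.IsPotential (fun v => ∑' n : ℕ, if 1 ≤ n then (2 : ℝ)⁻¹ ^ n * ψ n v else 0) ∧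
    (∀ n : ℕ, 1 ≤ n →
      {v : V | (∑' m : ℕ, if 1 ≤ m then (2 : ℝ)⁻¹ ^ m * ψ m v else 0) < n}
        ⊆ {w : V | N.G.dist N.o w < r n} ∧
      {v : V | (∑' m : ℕ, if 1 ≤ m then (2 : ℝ)⁻¹ ^ m * ψ m v else 0) < n}.Finite) ∧
    (∀ M : ℝ, 0 < M →
      {v : V | (∑' m : ℕ, if 1 ≤ m then (2 : ℝ)⁻¹ ^ m * ψ m v else 0) ≤ M}.Finite) := by
  have hsm : ∀ v, Summable (fun n : ℕ => if 1 ≤ n then (2 : ℝ)⁻¹ ^ n * ψ n v else 0) := by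
    intro v
    obtain ⟨K, hK⟩ := N.harnack v
    have hg : Summable (fun n : ℕ => (2 : ℝ)⁻¹ ^ n * K) :=
      (summable_geometric_of_lt_one (by norm_num) (by norm_num)).mul_right K
    have hK0 : 0 ≤ K := le_trans ((hpot 1 le_rfl).1 v) (hK _ (hpot 1 le_rfl))
    refine Summable.of_nonneg_of_le (fun n => ?_) (fun n => ?_) hg
    · split_ifs with h
      · exact mul_nonneg (by positivity) ((hpot n h).1 v)
      · exact le_rfl
    · split_ifs with h
      · exact mul_le_mul_of_nonneg_left (hK _ (hpot n h)) (by positivity)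
      · positivity
  have hnn : ∀ v, ∀ n : ℕ, 0 ≤ (if 1 ≤ n then (2 : ℝ)⁻¹ ^ n * ψ n v else 0) := by
    intro v n
    split_ifs with h
    · exact mul_nonneg (by positivity) ((hpot n h).1 v)
    · exact le_rfl
  have hlap : ∀ v, HasSum (fun n : ℕ => if 1 ≤ n then (2 : ℝ)⁻¹ ^ n * N.lap (ψ n) v else 0)
      (N.lap (fun v => ∑' n : ℕ, if 1 ≤ n then (2 : ℝ)⁻¹ ^ n * ψ n v else 0) v) := by
    intro v
    rw [N.lap_eq]
    have := hasSum_sum (s := N.nb v) (fun y _ =>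
      (((hsm y).hasSum.sub (hsm v).hasSum).mul_left (N.c v y)))
    have e : (fun n : ℕ => if 1 ≤ n then (2 : ℝ)⁻¹ ^ n * N.lap (ψ n) v else 0) =
        (fun b : ℕ => ∑ i ∈ N.nb v, N.c v i * ((if 1 ≤ b then (2 : ℝ)⁻¹ ^ b * ψ b i else 0)
          - if 1 ≤ b then (2 : ℝ)⁻¹ ^ b * ψ b v else 0)) := by
      funext n
      split_ifs with h
      · rw [N.lap_eq, Finset.mul_sum]
        exact Finset.sum_congr rfl (fun y _ => by ring)
      · simp
    rw [e]; exact this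
  have hsub : ∀ n : ℕ, 1 ≤ n →
      {v : V | (∑' m : ℕ, if 1 ≤ m then (2 : ℝ)⁻¹ ^ m * ψ m v else 0) < n}
        ⊆ {w : V | N.G.dist N.o w < r n} := by
    intro n hn v hv
    simp only [Set.mem_ofPred_eq] at hv ⊢
    by_contra hd
    have hn' : (0 : ℝ) < n := by exact_mod_cast hn
    have h1 := N.outside hrec (ψ n) (hpot n hn) (r n) (n * 2 ^ n) (by positivity)
      (hmin n hn) v (by omega)
    have h2 := (hsm v).le_tsum n (fun j _ => hnn v j)
    rw [if_pos hn] at h2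
    have h3 : (n : ℝ) ≤ (2 : ℝ)⁻¹ ^ n * ψ n v := by
      rw [inv_pow, inv_mul_eq_div, le_div_iff₀ (by positivity)]
      exact h1
    linarith
  refine ⟨⟨fun v => tsum_nonneg (hnn v), ?_, ?_, ?_⟩,
    fun n hn => ⟨hsub n hn, (N.ball_finite _).subset (hsub n hn)⟩, ?_⟩
  · have : ∀ n : ℕ, (if 1 ≤ n then (2 : ℝ)⁻¹ ^ n * ψ n N.o else 0) = 0 := by
      intro n
      split_ifs with h
      · rw [(hpot n h).2.1, mul_zero]
      · rfl
    simp only [this, tsum_zero]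
  · refine (hlap N.o).unique ?_
    rw [← hasSum_nat_add_iff' 1]
    have hg := (hasSum_geometric_of_lt_one (r := (2 : ℝ)⁻¹) (by norm_num) (by norm_num)).mul_left
      (2 : ℝ)⁻¹
    have e1 : (fun n : ℕ => if 1 ≤ n + 1 then (2 : ℝ)⁻¹ ^ (n + 1) * N.lap (ψ (n + 1)) N.o else 0)
        = fun i : ℕ => (2 : ℝ)⁻¹ * 2⁻¹ ^ i := by
      funext n
      rw [if_pos (by omega), (hpot (n + 1) (by omega)).2.2.1]
      ring
    have e2 : (1 - ∑ i ∈ Finset.range 1, if 1 ≤ i then (2 : ℝ)⁻¹ ^ i * N.lap (ψ i) N.o else 0)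
        = 2⁻¹ * (1 - 2⁻¹)⁻¹ := by
      rw [Finset.sum_range_one, if_neg (by omega)]
      norm_num
    rw [e1, e2]; exact hg
  · intro v hv
    refine (hlap v).unique ?_
    convert hasSum_zero with n
    split_ifs with h
    · rw [(hpot n h).2.2.2 v hv, mul_zero]
    · rfl
  · intro M hM
    obtain ⟨n, hn⟩ := exists_nat_gt M
    have hn1 : 1 ≤ n := by
      have : (0 : ℝ) < n := hM.trans hn
      exact_mod_cast this
    exact ((N.ball_finite _).subset (hsub n hn1)).subset (fun v hv => lt_of_le_of_lt hv hn)
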